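/- Let H be a finitely generated residually finite group, H₁ an abelian subgroup of finite index in H, and Z the centralizer of H₁ in H. Then there exists a subgroup K of H₁ which is characteristic in H₁ and of finite index in H₁, such that every h ∈ H whose conjugation action on H₁/K is trivial (i.e., such that h a h⁻¹ a⁻¹ ∈ K for all a ∈ H₁) belongs to Z·H₁, the subgroup generated by Z and H₁. -/

import Mathlib

/-!
Let `Z` be the centralizer of a finitely generated subgroup `A` of `H`, and suppose that `Z` has
finite index. The commutator `⁅h, a⁆` with `a ∈ A` depends only on the coset `hZ`, so there are only
finitely many cosets to take care of. For a coset `rZ ≠ Z` some `⁅r, a⁆` is nontrivial, and `A` has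
a finite-index subgroup that avoids it: if `⁅r, a⁆ ∉ A` then `A` itself does, and otherwise one uses
that `A`, a finitely generated group with a center of finite index, is residually finite.

The intersection `N` of these subgroups has finite index in `A`. As `A` is finitely generated, it
has only finitely many homomorphisms to the finite group `Perm (A ⧸ N)`; let `K` be the intersection
of their kernels. It is characteristic and of finite index, and it is contained in `N` because the
action of `A` on `A ⧸ N` is one of these homomorphisms.
-/

section CharacteristicSubgroup

variable {G : Type*} [Group G]

theorem finite_monoidHom_of_fg (P : Type*) [Group P] [Finite P] [Group.FG G] :
    Finite (G →* P) := by
  obtain ⟨S, hS⟩ := Group.fg_def.1 ‹Group.FG G›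
  refine Finite.of_injective (fun (f : G →* P) (s : S) => f s) fun f g hfg => ?_
  exact MonoidHom.eq_of_eqOn_dense hS fun s hs => congrFun hfg ⟨s, hs⟩

theorem characteristic_iInf_ker (P : Type*) [Group P] :
    (⨅ f : G →* P, f.ker).Characteristic := by
  refine Subgroup.characteristic_iff_le_comap.2 fun φ g hg => ?_
  simp only [Subgroup.mem_comap, Subgroup.mem_iInf, MonoidHom.mem_ker] at hg ⊢
  exact fun f => hg (f.comp φ.toMonoidHom)

theorem exists_characteristic_finiteIndex_le [Group.FG G] (N : Subgroup G) [N.FiniteIndex] :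
    ∃ K : Subgroup G, K.Characteristic ∧ K.FiniteIndex ∧ K ≤ N := by
  have := finite_monoidHom_of_fg (G := G) (Equiv.Perm (G ⧸ N))
  refine ⟨⨅ f : G →* Equiv.Perm (G ⧸ N), f.ker, characteristic_iInf_ker _,
    Subgroup.finiteIndex_iInf fun f => inferInstance, ?_⟩
  calc ⨅ f : G →* Equiv.Perm (G ⧸ N), f.ker
      ≤ (MulAction.toPermHom G (G ⧸ N)).ker := iInf_le _ _
    _ = N.normalCore := N.normalCore_eq_ker.symm
    _ ≤ N := N.normalCore_le

end CharacteristicSubgroup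

section ResiduallyFinite

theorem isAddTorsion_addCircle_rat : IsAddTorsion (AddCircle (1 : ℚ)) := by
  intro x
  obtain ⟨q, rfl⟩ := QuotientAddGroup.mk_surjective x
  exact AddCircle.isOfFinAddOrder_iff_exists_rat_eq_div.2 ⟨q, by simp⟩

-- The characters `G → ℚ/ℤ` separate points, and a finitely generated subgroup of `ℚ/ℤ` is finite.
theorem residuallyFinite_of_commGroup_fg (G : Type*) [CommGroup G] [Group.FG G] :
    Group.ResiduallyFinite G := by
  refine Group.residuallyFinite_iff_exists_finiteIndex.2 fun g hg => ?_
  obtain ⟨χ, hχ⟩ := CharacterModule.exists_character_apply_ne_zero_of_ne_zero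
    (a := Additive.ofMul g) hg
  let f : G →* Multiplicative (AddCircle (1 : ℚ)) := AddMonoidHom.toMultiplicativeRight χ
  have htors : IsMulTorsion (Multiplicative (AddCircle (1 : ℚ))) :=
    Multiplicative.forall.2 fun x => isOfFinOrder_ofAdd_iff.2 (isAddTorsion_addCircle_rat x)
  have : Finite f.range := CommGroup.finite_of_fg_isMulTorsion _ (htors.subgroup f.range)
  exact ⟨f.ker, inferInstance, hχ⟩

theorem exists_finiteIndex_notMem_map_subtype {G : Type*} [Group G] (A : Subgroup G)
    [Group.ResiduallyFinite A] {g : G} (hg : g ≠ 1) :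
    ∃ N : Subgroup A, N.FiniteIndex ∧ g ∉ N.map A.subtype := by
  by_cases hgA : g ∈ A
  · obtain ⟨N, hN, hgN⟩ := Group.residuallyFinite_iff_exists_finiteIndex.1
      ‹Group.ResiduallyFinite A› ⟨g, hgA⟩ (by simpa using hg)
    exact ⟨N, hN, by simpa [hgA] using hgN⟩
  · exact ⟨⊤, inferInstance, by simpa using hgA⟩

theorem residuallyFinite_of_finiteIndex {G : Type*} [Group G] (A : Subgroup G) [A.FiniteIndex]
    [Group.ResiduallyFinite A] : Group.ResiduallyFinite G := by
  refine Group.residuallyFinite_iff_exists_finiteIndex.2 fun g hg => ?_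
  obtain ⟨N, hN, hgN⟩ := exists_finiteIndex_notMem_map_subtype A hg
  refine ⟨N.map A.subtype, ⟨?_⟩, hgN⟩
  rw [Subgroup.index_map_subtype]
  exact mul_ne_zero hN.index_ne_zero Subgroup.FiniteIndex.index_ne_zero

open scoped IsMulCommutative in
theorem residuallyFinite_of_finiteIndex_center (G : Type*) [Group G] [Group.FG G]
    [(Subgroup.center G).FiniteIndex] : Group.ResiduallyFinite G := by
  have : Group.ResiduallyFinite (Subgroup.center G) :=
    residuallyFinite_of_commGroup_fg (Subgroup.center G)
  exact residuallyFinite_of_finiteIndex (Subgroup.center G)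

end ResiduallyFinite

section Centralizer

open scoped commutatorElement

variable {H : Type*} [Group H] (A : Subgroup H)

theorem finiteIndex_center_of_finiteIndex_centralizer
    [(Subgroup.centralizer (A : Set H)).FiniteIndex] : (Subgroup.center A).FiniteIndex := by
  refine Subgroup.finiteIndex_of_le (H := (Subgroup.centralizer (A : Set H)).subgroupOf A)
    fun z hz => Subgroup.mem_center_iff.2 fun a => Subtype.ext ?_
  exact Subgroup.mem_centralizer_iff.1 (Subgroup.mem_subgroupOf.1 hz) a a.2

theorem commutatorElement_eq_of_mk_eq_mk {S : Set H} {h r a : H}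
    (hr : (h : H ⧸ Subgroup.centralizer S) = r) (ha : a ∈ S) : ⁅h, a⁆ = ⁅r, a⁆ := by
  have hz : a * (h⁻¹ * r) = h⁻¹ * r * a :=
    Subgroup.mem_centralizer_iff.1 (QuotientGroup.eq.1 hr) a ha
  calc ⁅h, a⁆ = h * (a * (h⁻¹ * r)) * r⁻¹ * a⁻¹ := by group
    _ = h * (h⁻¹ * r * a) * r⁻¹ * a⁻¹ := by rw [hz]
    _ = ⁅r, a⁆ := by group

theorem exists_finiteIndex_mem_centralizer_of_commutatorElement_mem
    [Group.ResiduallyFinite A] (r : H) :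
    ∃ N : Subgroup A, N.FiniteIndex ∧
      ((∀ a ∈ A, ⁅r, a⁆ ∈ N.map A.subtype) → r ∈ Subgroup.centralizer (A : Set H)) := by
  by_cases hr : r ∈ Subgroup.centralizer (A : Set H)
  · exact ⟨⊤, inferInstance, fun _ => hr⟩
  · have hne : ∃ a ∈ A, ⁅r, a⁆ ≠ 1 := by
      simpa [Subgroup.mem_centralizer_iff_commutator_eq_one'] using hr
    obtain ⟨a, ha, hra⟩ := hne
    obtain ⟨N, hN, hraN⟩ := exists_finiteIndex_notMem_map_subtype A hra
    exact ⟨N, hN, fun h => absurd (h a ha) hraN⟩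

theorem exists_finiteIndex_forall_mem_centralizer_of_commutatorElement_mem
    [Group.ResiduallyFinite A] [(Subgroup.centralizer (A : Set H)).FiniteIndex] :
    ∃ N : Subgroup A, N.FiniteIndex ∧ ∀ h : H,
      (∀ a ∈ A, ⁅h, a⁆ ∈ N.map A.subtype) → h ∈ Subgroup.centralizer (A : Set H) := by
  choose N hN hNZ using exists_finiteIndex_mem_centralizer_of_commutatorElement_mem A
  let rep : H ⧸ Subgroup.centralizer (A : Set H) → H := Quotient.out
  refine ⟨⨅ q, N (rep q), Subgroup.finiteIndex_iInf fun q => hN (rep q), fun h hh => ?_⟩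
  have hrep : ∀ a ∈ A, ⁅h, a⁆ = ⁅rep h, a⁆ := fun a ha =>
    commutatorElement_eq_of_mk_eq_mk (QuotientGroup.out_eq' _).symm ha
  have hrepZ : rep h ∈ Subgroup.centralizer (A : Set H) := hNZ _ fun a ha =>
    hrep a ha ▸ Subgroup.map_mono (iInf_le (fun q => N (rep q)) h) (hh a ha)
  refine Subgroup.mem_centralizer_iff_commutator_eq_one'.2 fun a ha => ?_
  rw [hrep a ha, Subgroup.mem_centralizer_iff_commutator_eq_one'.1 hrepZ a ha]

theorem stmt4_general [Group.FG A] [(Subgroup.centralizer (A : Set H)).FiniteIndex] :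
    ∃ K : Subgroup A, K.Characteristic ∧ K.FiniteIndex ∧ ∀ h : H,
      (∀ a ∈ A, ⁅h, a⁆ ∈ K.map A.subtype) → h ∈ Subgroup.centralizer (A : Set H) := by
  have := finiteIndex_center_of_finiteIndex_centralizer A
  have := residuallyFinite_of_finiteIndex_center A
  obtain ⟨N, hN, hNZ⟩ := exists_finiteIndex_forall_mem_centralizer_of_commutatorElement_mem A
  obtain ⟨K, hchar, hK, hKN⟩ := exists_characteristic_finiteIndex_le N
  exact ⟨K, hchar, hK, fun h hh => hNZ h fun a ha => Subgroup.map_mono hKN (hh a ha)⟩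

end Centralizer

/-- Key intermediate claim in the proof of Proposition 3.3.0(1): for `H` finitely
generated and residually finite, `H₁` an abelian finite-index subgroup with
centralizer `Z` in `H`, there is a characteristic finite-index subgroup `K` of
`H₁` such that any `h ∈ H` acting trivially on `H₁/K` by conjugation lies in `Z·H₁`. -/
theorem stmt4 (H : Type*) [Group H] (hFG : Group.FG H)
    (hRF : ∀ h : H, h ≠ 1 → ∃ N : Subgroup H, N.Normal ∧ N.FiniteIndex ∧ h ∉ N)
    (H₁ : Subgroup H) [H₁.FiniteIndex]
    (hab : ∀ x ∈ H₁, ∀ y ∈ H₁, x * y = y * x) :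
    ∃ K : Subgroup H₁, K.Characteristic ∧ K.FiniteIndex ∧
      ∀ h : H, (∀ a ∈ H₁, h * a * h⁻¹ * a⁻¹ ∈ K.map H₁.subtype) →
        h ∈ Subgroup.centralizer (H₁ : Set H) ⊔ H₁ := by
  have hZ : H₁ ≤ Subgroup.centralizer (H₁ : Set H) := fun x hx y hy => hab y hy x hx
  have := Subgroup.finiteIndex_of_le hZ
  simpa only [sup_of_le_left hZ, commutatorElement_def] using stmt4_general H₁
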